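/- Let N ≥ 100 be an integer and let 𝓕 = 𝓕_dom ⊔ 𝓕_res be a finite set of frequencies with positive amplitudes p_f, where each f ∈ 𝓕 is written f = (n_f + ν_f)/N with n_f ∈ {0,…,N−1} and ν_f ∈ (−1/2, 1/2]. Assume the dominant frequencies are separated: for all distinct f, f' ∈ 𝓕_dom, the wrap-around distance min_{m∈ℤ} |f − f' − m| is at least 2/N. Let y ∈ ℂ^N with y_t = Σ_{f∈𝓕} p_f·exp(−2πi·f·t) for t = 0,…,N−1, and let y_off := i·F·Im(F^{−1}y) be its off-grid component. Then for every f ∈ 𝓕_dom: |p_f·sin(πν_f)| ≤ 3·( ‖y_off‖_∞ + Σ_{f'∈𝓕_res} p_{f'} ), and consequently |p_f·ν_f| ≤ 2·( ‖y_off‖_∞ + Σ_{f'∈𝓕_res} p_{f'} ). -/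

import Mathlib

open Matrix

/-- The shifted Fourier matrix `(F_ν)_{t,k} = exp(−2πi t (k+ν)/N)`; `F = Fmat N 0` is the
discrete Fourier matrix. -/
noncomputable def Fmat (N : ℕ) (ν : ℝ) : Matrix (Fin N) (Fin N) ℂ :=
  Matrix.of fun t k =>
    Complex.exp (((-(2 * Real.pi * ((t : ℕ) : ℝ) * (((k : ℕ) : ℝ) + ν) / (N : ℝ))) : ℝ)
      * Complex.I)

/-- `F^{-1} y = (1/N) F^* y`. -/
noncomputable def invF (N : ℕ) (y : Fin N → ℂ) : Fin N → ℂ :=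
  (((N : ℂ))⁻¹ • (Fmat N 0)ᴴ) *ᵥ y

/-- The off-grid component `y_off = i · F · Im(F^{-1} y)`. -/
noncomputable def offGrid (N : ℕ) (y : Fin N → ℂ) : Fin N → ℂ :=
  fun t => Complex.I * ((Fmat N 0 *ᵥ fun n => (((invF N y n).im : ℝ) : ℂ)) t)

theorem aux_side {ι : Type} [DecidableEq ι] (N : ℕ) (hN : 100 ≤ N) (s : Finset ι) (θ : ι → ℝ)
    (h1 : ∀ i ∈ s, θ i ≤ 1 / 2) (h2 : ∀ i ∈ s, 2 / (N : ℝ) ≤ θ i)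
    (h3 : ∀ i ∈ s, ∀ j ∈ s, i ≠ j → 2 / (N : ℝ) ≤ |θ i - θ j|) :
    ∑ i ∈ s, 1 / (Real.sin (Real.pi * θ i)) ^ 2
      ≤ (N : ℝ) / 4 + (N : ℝ) ^ 2 / (2 * Real.pi ^ 2) := by
  have hN0 : (0 : ℝ) < N := by
    have : (100 : ℝ) ≤ N := by exact_mod_cast hN
    linarith
  have hpi := Real.pi_pos
  set h : ℕ → ℝ := fun k => 1 + (N : ℝ) ^ 2 / (4 * Real.pi ^ 2) * ((k : ℝ) ^ 2)⁻¹ with hh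
  set k : ι → ℕ := fun i => ⌊(N : ℝ) * θ i / 2⌋₊ with hk
  have hu : ∀ i ∈ s, 1 ≤ (N : ℝ) * θ i / 2 := by
    intro i hi
    have := h2 i hi
    rw [div_le_iff₀ hN0] at this
    linarith
  have hk1 : ∀ i ∈ s, 1 ≤ k i := by
    intro i hi
    exact Nat.le_floor (by simpa using hu i hi)
  have hkle : ∀ i ∈ s, (k i : ℝ) ≤ (N : ℝ) * θ i / 2 := by
    intro i hi
    exact Nat.floor_le (by linarith [hu i hi])
  have hk2 : ∀ i ∈ s, k i < N / 4 + 1 := by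
    intro i hi
    have h4 : (k i : ℝ) ≤ (N : ℝ) / 4 := by
      have := hkle i hi
      have := mul_le_mul_of_nonneg_left (h1 i hi) hN0.le
      linarith
    have h5 : (k i * 4 : ℕ) ≤ N := by
      have : (k i : ℝ) * 4 ≤ N := by linarith
      exact_mod_cast this
    omega
  have hinj : Set.InjOn k s := by
    intro i hi j hj hij
    by_contra hne
    have h6 := h3 i hi j hj hne
    have a1 := hkle i hi
    have a2 := hkle j hj
    have a3 := Nat.lt_floor_add_one ((N : ℝ) * θ i / 2)
    have a4 := Nat.lt_floor_add_one ((N : ℝ) * θ j / 2)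
    have e : (k i : ℝ) = k j := by exact_mod_cast hij
    change (N : ℝ) * θ i / 2 < (k i : ℝ) + 1 at a3
    change (N : ℝ) * θ j / 2 < (k j : ℝ) + 1 at a4
    rw [div_le_iff₀ hN0] at h6
    rcases abs_cases (θ i - θ j) with ⟨h7, _⟩ | ⟨h7, _⟩ <;> rw [h7] at h6 <;> nlinarith
  have hterm : ∀ i ∈ s, 1 / (Real.sin (Real.pi * θ i)) ^ 2 ≤ h (k i) := by
    intro i hi
    have hkp : (1 : ℝ) ≤ k i := by exact_mod_cast hk1 i hi
    have hle := hkle i hi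
    have hθ : 0 < θ i := lt_of_lt_of_le (by positivity) (h2 i hi)
    set x := Real.pi * θ i with hx
    have hx0 : 0 < x := by positivity
    have hx2 : x ≤ Real.pi / 2 := by
      have := mul_le_mul_of_nonneg_left (h1 i hi) hpi.le
      linarith
    have hs : 0 < Real.sin x := Real.sin_pos_of_pos_of_lt_pi hx0 (by linarith)
    have hxc : x * Real.cos x ≤ Real.sin x := by
      rcases hx2.lt_or_eq with hlt | heq
      · have hc : 0 < Real.cos x := Real.cos_pos_of_mem_Ioo ⟨by linarith, hlt⟩
        have := (Real.lt_tan hx0 hlt).le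
        rw [Real.tan_eq_sin_div_cos, le_div_iff₀ hc] at this
        exact this
      · rw [heq, Real.cos_pi_div_two]; simp
    have hc0 : 0 ≤ Real.cos x := Real.cos_nonneg_of_mem_Icc ⟨by linarith, hx2⟩
    have b1 : 1 / (Real.sin x) ^ 2 ≤ 1 + 1 / x ^ 2 := by
      have : 1 + 1 / x ^ 2 = (x ^ 2 + 1) / x ^ 2 := by field_simp
      rw [this, div_le_div_iff₀ (by positivity) (by positivity)]
      have hsc := Real.sin_sq_add_cos_sq x
      have := pow_le_pow_left₀ (by positivity) hxc 2
      nlinarith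
    have b2 : 1 / x ^ 2 ≤ (N : ℝ) ^ 2 / (4 * Real.pi ^ 2) * ((k i : ℝ) ^ 2)⁻¹ := by
      have e : (N : ℝ) ^ 2 / (4 * Real.pi ^ 2) * ((k i : ℝ) ^ 2)⁻¹
          = 1 / (2 * Real.pi * k i / N) ^ 2 := by
        field_simp; norm_num
      rw [e]
      apply one_div_le_one_div_of_le (by positivity)
      apply pow_le_pow_left₀ (by positivity)
      rw [div_le_iff₀ hN0, hx]
      nlinarith
    simp only [hh]; linarith
  calc ∑ i ∈ s, 1 / (Real.sin (Real.pi * θ i)) ^ 2 ≤ ∑ i ∈ s, h (k i) := Finset.sum_le_sum hterm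
    _ = ∑ m ∈ s.image k, h m := (Finset.sum_image (fun i hi j hj hij => hinj hi hj hij)).symm
    _ ≤ ∑ m ∈ Finset.Ioo 0 (N / 4 + 1), h m := by
        apply Finset.sum_le_sum_of_subset_of_nonneg
        · intro m hm
          obtain ⟨i, hi, rfl⟩ := Finset.mem_image.1 hm
          exact Finset.mem_Ioo.2 ⟨hk1 i hi, hk2 i hi⟩
        · intro m _ _; simp only [hh]; positivity
    _ ≤ _ := by
        simp only [hh]
        rw [Finset.sum_add_distrib, ← Finset.mul_sum]
        have c1 := sum_Ioo_inv_sq_le (α := ℝ) 0 (N / 4 + 1)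
        have c2 : ((N / 4 : ℕ) : ℝ) ≤ (N : ℝ) / 4 := by
          have := @Nat.cast_div_le ℝ _ _ _ N 4
          simpa using this
        have c3 := mul_le_mul_of_nonneg_left c1
          (show (0 : ℝ) ≤ (N : ℝ) ^ 2 / (4 * Real.pi ^ 2) by positivity)
        have c4 : (N : ℝ) ^ 2 / (4 * Real.pi ^ 2) * (2 / (((0 : ℕ) : ℝ) + 1))
            = (N : ℝ) ^ 2 / (2 * Real.pi ^ 2) := by
          push_cast; field_simp; norm_num
        rw [c4] at c3
        have c5 : ∑ m ∈ Finset.Ioo 0 (N / 4 + 1), (1 : ℝ) = ((N / 4 : ℕ) : ℝ) := by simp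
        rw [c5]
        linarith

theorem aux_pack {ι : Type} [DecidableEq ι] (N : ℕ) (hN : 100 ≤ N) (s : Finset ι) (θ : ι → ℝ)
    (h1 : ∀ i ∈ s, |θ i| ≤ 1 / 2) (h2 : ∀ i ∈ s, 2 / (N : ℝ) ≤ |θ i|)
    (h3 : ∀ i ∈ s, ∀ j ∈ s, i ≠ j → 2 / (N : ℝ) ≤ |θ i - θ j|) :
    ∑ i ∈ s, 1 / (Real.sin (Real.pi * θ i)) ^ 2
      ≤ (N : ℝ) / 2 + (N : ℝ) ^ 2 / Real.pi ^ 2 := by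
  rw [← Finset.sum_filter_add_sum_filter_not s (fun i => 0 ≤ θ i)]
  have A := aux_side N hN (s.filter (fun i => 0 ≤ θ i)) θ
    (fun i hi => (le_abs_self _).trans (h1 i (Finset.mem_filter.1 hi).1))
    (fun i hi => by
      have := h2 i (Finset.mem_filter.1 hi).1
      rwa [abs_of_nonneg (Finset.mem_filter.1 hi).2] at this)
    (fun i hi j hj => h3 i (Finset.mem_filter.1 hi).1 j (Finset.mem_filter.1 hj).1)
  have B := aux_side N hN (s.filter (fun i => ¬ 0 ≤ θ i)) (fun i => - θ i)
    (fun i hi => (neg_le_abs _).trans (h1 i (Finset.mem_filter.1 hi).1))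
    (fun i hi => by
      have := h2 i (Finset.mem_filter.1 hi).1
      rwa [abs_of_neg (not_le.1 (Finset.mem_filter.1 hi).2)] at this)
    (fun i hi j hj hij => by
      have := h3 i (Finset.mem_filter.1 hi).1 j (Finset.mem_filter.1 hj).1 hij
      rw [← abs_neg] at this
      convert this using 2
      ring)
  simp only [mul_neg, Real.sin_neg, neg_sq] at B
  have e : (N : ℝ) ^ 2 / (2 * Real.pi ^ 2) = (N : ℝ) ^ 2 / Real.pi ^ 2 / 2 := by
    field_simp
  rw [e] at A B
  linarith

theorem aux_geom (M : ℕ) (θ : ℝ) :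
    ‖∑ a ∈ Finset.range M, Complex.exp (Complex.I * ((2 * Real.pi * θ : ℝ) : ℂ)) ^ a‖
      * |Real.sin (Real.pi * θ)| ≤ 1 := by
  set z := Complex.exp (Complex.I * ((2 * Real.pi * θ : ℝ) : ℂ)) with hz
  have h1 : ‖z - 1‖ = 2 * |Real.sin (Real.pi * θ)| := by
    rw [hz, Complex.norm_exp_I_mul_ofReal_sub_one, Real.norm_eq_abs, abs_mul]
    norm_num
    congr 2; ring
  have h2 : ‖z‖ = 1 := Complex.norm_exp_I_mul_ofReal _
  have h3 := congrArg norm (geom_sum_mul z M)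
  rw [norm_mul, h1] at h3
  have h4 : ‖z ^ M - 1‖ ≤ 2 := by
    refine (norm_sub_le _ _).trans ?_
    rw [norm_pow, h2]; norm_num
  linarith

theorem aux_main {ι : Type} [DecidableEq ι] (N : ℕ) (hN : 100 ≤ N) (dom : Finset ι) (f : ι → ℝ)
    (c : ι → ℂ) (S : ℝ)
    (hsep : ∀ i ∈ dom, ∀ j ∈ dom, i ≠ j → ∀ m : ℤ, 2 / (N : ℝ) ≤ |f i - f j - (m : ℝ)|)
    (hS : ∀ t : ℕ, 1 ≤ t → t < N → ‖∑ i ∈ dom, c i *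
        Complex.exp (((-(2 * Real.pi * f i * (t : ℝ))) : ℝ) * Complex.I)‖ ≤ S) :
    ∀ i ∈ dom, ‖c i‖ ≤ 3 * S := by
  intro i0 hi0
  obtain ⟨j, hj, hmax⟩ := Finset.exists_max_image dom (fun i => ‖c i‖) ⟨i0, hi0⟩
  refine (hmax i0 hi0).trans ?_
  set M := N / 2 with hM
  have hN' : (100 : ℝ) ≤ N := by exact_mod_cast hN
  have hMr : ((N : ℝ) - 1) / 2 ≤ M := by
    have : N ≤ 2 * M + 1 := by omega
    have : (N : ℝ) ≤ 2 * M + 1 := by exact_mod_cast this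
    linarith
  have hMpos : (0 : ℝ) < M := by linarith
  set z : ι → ℂ := fun i => Complex.exp (Complex.I * ((2 * Real.pi * (f j - f i) : ℝ) : ℂ)) with hz
  set D : ι → ℂ := fun i => ∑ a ∈ Finset.range M, z i ^ a with hD
  have hzn : ∀ i, ‖z i‖ = 1 := fun i => Complex.norm_exp_I_mul_ofReal _
  set w : ℕ → ℂ := fun t => ∑ i ∈ dom, c i *
        Complex.exp (((-(2 * Real.pi * f i * (t : ℝ))) : ℝ) * Complex.I) with hw
  set e : ℕ → ℂ := fun t => Complex.exp (((2 * Real.pi * f j * (t : ℝ)) : ℝ) * Complex.I) with he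
  have hwe : ∀ t, w t * e t = ∑ i ∈ dom, c i * z i ^ t := by
    intro t
    simp only [hw, he, hz]
    rw [Finset.sum_mul]
    refine Finset.sum_congr rfl fun i _ => ?_
    rw [mul_assoc, ← Complex.exp_add, ← Complex.exp_nat_mul]
    congr 2
    push_cast; ring
  have key : ∑ a ∈ Finset.range M, ∑ b ∈ Finset.range M, w (a + b + 1) * e (a + b + 1)
      = ∑ i ∈ dom, c i * (z i * D i ^ 2) := by
    simp only [hwe]
    simp_rw [Finset.sum_comm (s := Finset.range M) (t := dom)]
    refine Finset.sum_congr rfl fun i _ => ?_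
    simp only [hD]
    rw [sq, Finset.sum_mul_sum, Finset.mul_sum, Finset.mul_sum]
    refine Finset.sum_congr rfl fun a _ => ?_
    rw [Finset.mul_sum, Finset.mul_sum]
    refine Finset.sum_congr rfl fun b _ => ?_
    ring
  have hup : ‖∑ a ∈ Finset.range M, ∑ b ∈ Finset.range M, w (a + b + 1) * e (a + b + 1)‖
      ≤ (M : ℝ) ^ 2 * S := by
    have : ∀ a ∈ Finset.range M, ‖∑ b ∈ Finset.range M, w (a + b + 1) * e (a + b + 1)‖
        ≤ M * S := by
      intro a ha
      refine (norm_sum_le_of_le _ (f := fun b => w (a + b + 1) * e (a + b + 1))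
        (n := fun _ => S) ?_).trans (by simp)
      intro b hb
      have ha := Finset.mem_range.1 ha
      have hb := Finset.mem_range.1 hb
      rw [norm_mul, show ‖e (a + b + 1)‖ = 1 from Complex.norm_exp_ofReal_mul_I _, mul_one]
      exact hS _ (by omega) (by omega)
    refine (norm_sum_le_of_le _ this).trans ?_
    simp; apply le_of_eq; ring
  rw [key, ← Finset.add_sum_erase _ _ hj] at hup
  have hzj : z j = 1 := by simp [hz]
  have hDj : D j = M := by simp [hD, hzj]
  have hsum : ‖∑ i ∈ dom.erase j, c i * (z i * D i ^ 2)‖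
      ≤ ‖c j‖ * ((N : ℝ) / 2 + (N : ℝ) ^ 2 / Real.pi ^ 2) := by
    set θ : ι → ℝ := fun i => (f j - f i) - round (f j - f i) with hθ
    have hsin : ∀ i ∈ dom.erase j, ‖D i‖ ^ 2 ≤ 1 / (Real.sin (Real.pi * θ i)) ^ 2 := by
      intro i hi
      have hij := Finset.ne_of_mem_erase hi
      have hid := Finset.mem_of_mem_erase hi
      have hzθ : z i = Complex.exp (Complex.I * ((2 * Real.pi * θ i : ℝ) : ℂ)) := by
        simp only [hz, hθ]
        rw [Complex.exp_eq_exp_iff_exists_int]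
        refine ⟨round (f j - f i), ?_⟩
        push_cast; ring
      have hg := aux_geom M (θ i)
      rw [← hzθ] at hg
      change ‖D i‖ * _ ≤ 1 at hg
      have hpos : 0 < |Real.sin (Real.pi * θ i)| := by
        have h2 : 2 / (N : ℝ) ≤ |θ i| := hsep j hj i hid hij.symm _
        have h1 : |θ i| ≤ 1 / 2 := abs_sub_round _
        have h0 : 0 < |θ i| := lt_of_lt_of_le (by positivity) h2
        have : Real.sin (Real.pi * θ i) ≠ 0 := by
          intro h0'
          rw [Real.sin_eq_zero_iff_of_lt_of_lt] at h0'
          · rcases mul_eq_zero.1 h0' with h | h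
            · exact Real.pi_ne_zero h
            · simp [h] at h0
          · nlinarith [abs_le.1 h1, Real.pi_pos]
          · nlinarith [abs_le.1 h1, Real.pi_pos]
        exact abs_pos.2 this
      rw [le_div_iff₀ (by rw [← sq_abs]; positivity), ← sq_abs (Real.sin _), ← mul_pow]
      exact pow_le_one₀ (by positivity) hg
    have hpk := aux_pack N hN (dom.erase j) θ (fun i _ => abs_sub_round _)
      (fun i hi => hsep j hj i (Finset.mem_of_mem_erase hi) (Finset.ne_of_mem_erase hi).symm _)
      (fun i hi k hk hik => by
        have := hsep k (Finset.mem_of_mem_erase hk) i (Finset.mem_of_mem_erase hi) hik.symm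
          (round (f j - f i) - round (f j - f k))
        convert this using 2
        simp only [hθ]; push_cast; ring)
    calc _ ≤ ∑ i ∈ dom.erase j, ‖c j‖ * (1 / (Real.sin (Real.pi * θ i)) ^ 2) := by
          apply norm_sum_le_of_le
          intro i hi
          rw [norm_mul, norm_mul, hzn, one_mul, norm_pow]
          exact mul_le_mul (hmax i (Finset.mem_of_mem_erase hi)) (hsin i hi) (by positivity)
            (by positivity)
      _ ≤ _ := by
          rw [← Finset.mul_sum]
          exact mul_le_mul_of_nonneg_left hpk (norm_nonneg _)
  have hmain : ‖c j * (z j * D j ^ 2)‖ = ‖c j‖ * (M : ℝ) ^ 2 := by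
    rw [hzj, hDj]; simp
  have htri := norm_sub_le (c j * (z j * D j ^ 2) + ∑ i ∈ dom.erase j, c i * (z i * D i ^ 2))
    (∑ i ∈ dom.erase j, c i * (z i * D i ^ 2))
  rw [add_sub_cancel_right, hmain] at htri
  have hB : (N : ℝ) / 2 + (N : ℝ) ^ 2 / Real.pi ^ 2 ≤ 2 / 3 * (M : ℝ) ^ 2 := by
    have p1 : (9 : ℝ) ≤ Real.pi ^ 2 := by nlinarith [Real.pi_gt_three]
    have p2 : (N : ℝ) ^ 2 / Real.pi ^ 2 ≤ (N : ℝ) ^ 2 / 9 := by gcongr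
    have p3 := pow_le_pow_left₀ (by linarith) hMr 2
    nlinarith
  have hc := mul_le_mul_of_nonneg_left hB (norm_nonneg (c j))
  have hfin : (M : ℝ) ^ 2 * ‖c j‖ ≤ (M : ℝ) ^ 2 * (3 * S) := by nlinarith
  exact le_of_mul_le_mul_left hfin (by positivity)

theorem aux_orth (N : ℕ) (hN : 0 < N) (m : ℤ) :
    ∑ n : Fin N, Complex.exp (((-(2 * Real.pi * m * ((n : ℕ) : ℝ) / (N : ℝ)) : ℝ) : ℂ) * Complex.I)
      = if (N : ℤ) ∣ m then (N : ℂ) else 0 := by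
  have hN0 : (N : ℂ) ≠ 0 := by exact_mod_cast hN.ne'
  set ζ := Complex.exp (-(2 * Real.pi * m / N) * Complex.I) with hζ
  have h1 : ∀ n : ℕ, Complex.exp (((-(2 * Real.pi * m * (n : ℝ) / (N : ℝ)) : ℝ) : ℂ) * Complex.I)
      = ζ ^ n := by
    intro n
    rw [hζ, ← Complex.exp_nat_mul]
    congr 1; push_cast; ring
  simp only [h1]
  rw [Fin.sum_univ_eq_sum_range (fun n => ζ ^ n)]
  split_ifs with h
  · obtain ⟨k, rfl⟩ := h
    have : ζ = 1 := by
      rw [hζ, Complex.exp_eq_one_iff]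
      refine ⟨-k, ?_⟩
      push_cast; field_simp
    simp [this]
  · have hne : ζ ≠ 1 := by
      intro h1
      rw [hζ, Complex.exp_eq_one_iff] at h1
      obtain ⟨k, hk⟩ := h1
      apply h
      refine ⟨-k, ?_⟩
      have hpi : (Real.pi : ℂ) ≠ 0 := by exact_mod_cast Real.pi_ne_zero
      have hI := Complex.I_ne_zero
      field_simp at hk
      have : (m : ℂ) = ((N * -k : ℤ) : ℂ) := by push_cast; linear_combination -hk
      exact_mod_cast this
    have hpow : ζ ^ N = 1 := by
      rw [hζ, ← Complex.exp_nat_mul, Complex.exp_eq_one_iff]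
      refine ⟨-m, ?_⟩
      push_cast; field_simp
    have := geom_sum_mul ζ N
    rw [hpow, sub_self] at this
    exact (mul_eq_zero.1 this).resolve_right (sub_ne_zero.2 hne)

theorem aux_off (N : ℕ) (y : Fin N → ℂ) (t t' : Fin N) (h : (t : ℕ) + t' = N) :
    offGrid N y t = (y t - (starRingEnd ℂ) (y t')) / 2 := by
  have hN : 0 < N := by have := t.2; omega
  have hN0 : (N : ℂ) ≠ 0 := by exact_mod_cast hN.ne'
  have hinv : ∀ n, invF N y n = (N : ℂ)⁻¹ * ∑ s, (starRingEnd ℂ) (Fmat N 0 s n) * y s := by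
    intro n
    simp only [invF, Matrix.mulVec, dotProduct, Matrix.smul_apply, smul_eq_mul,
      Matrix.conjTranspose_apply, RCLike.star_def, Finset.mul_sum, mul_assoc]
  have him : ∀ x : ℂ, Complex.I * ((x.im : ℝ) : ℂ) = (x - (starRingEnd ℂ) x) / 2 := by
    intro x
    rw [Complex.sub_conj]; push_cast; ring
  have hA : ∀ s, ∑ n, Fmat N 0 t n * (starRingEnd ℂ) (Fmat N 0 s n)
      = if t = s then (N : ℂ) else 0 := by
    intro s
    have := aux_orth N hN ((t : ℕ) - (s : ℕ) : ℤ)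
    have hiff : ((N : ℤ) ∣ ((t : ℕ) - (s : ℕ) : ℤ)) ↔ t = s := by
      constructor
      · intro hd
        have a := t.2
        have b := s.2
        have := Int.eq_zero_of_abs_lt_dvd hd (by rw [abs_lt]; omega)
        apply Fin.ext; omega
      · rintro rfl; simp
    simp only [hiff] at this
    rw [← this]
    refine Finset.sum_congr rfl fun n _ => ?_
    simp only [Fmat, Matrix.of_apply]
    rw [← Complex.exp_conj, ← Complex.exp_add]
    congr 1
    simp only [map_mul, Complex.conj_ofReal, Complex.conj_I]
    push_cast; ring
  have hB : ∀ s, ∑ n, Fmat N 0 t n * Fmat N 0 s n = if t' = s then (N : ℂ) else 0 := by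
    intro s
    have := aux_orth N hN ((t : ℕ) + (s : ℕ) : ℤ)
    have hiff : ((N : ℤ) ∣ ((t : ℕ) + (s : ℕ) : ℤ)) ↔ t' = s := by
      have a := t.2
      have b := s.2
      have b' := t'.2
      constructor
      · intro hd
        have hd' : (N : ℤ) ∣ ((t : ℕ) + (s : ℕ) : ℤ) - N := dvd_sub_self_right.2 hd
        have := Int.eq_zero_of_abs_lt_dvd hd' (by rw [abs_lt]; omega)
        apply Fin.ext; omega
      · rintro rfl
        exact ⟨1, by omega⟩
    simp only [hiff] at this
    rw [← this]
    refine Finset.sum_congr rfl fun n _ => ?_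
    simp only [Fmat, Matrix.of_apply]
    rw [← Complex.exp_add]
    congr 1
    push_cast; ring
  have e1 : ∑ n, Fmat N 0 t n * invF N y n = y t := by
    simp only [hinv, Finset.mul_sum]
    rw [Finset.sum_comm]
    have : ∀ s, ∑ n, Fmat N 0 t n * ((N : ℂ)⁻¹ * ((starRingEnd ℂ) (Fmat N 0 s n) * y s))
        = (N : ℂ)⁻¹ * (if t = s then (N : ℂ) else 0) * y s := by
      intro s
      rw [← hA s, Finset.mul_sum, Finset.sum_mul]
      refine Finset.sum_congr rfl fun n _ => by ring
    simp only [this]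
    simp [hN0]
  have e2 : ∑ n, Fmat N 0 t n * (starRingEnd ℂ) (invF N y n) = (starRingEnd ℂ) (y t') := by
    simp only [hinv, map_mul, map_sum, Complex.conj_conj, map_inv₀, Complex.conj_natCast,
      Finset.mul_sum]
    rw [Finset.sum_comm]
    have : ∀ s, ∑ n, Fmat N 0 t n * ((N : ℂ)⁻¹ * (Fmat N 0 s n * (starRingEnd ℂ) (y s)))
        = (N : ℂ)⁻¹ * (if t' = s then (N : ℂ) else 0) * (starRingEnd ℂ) (y s) := by
      intro s
      rw [← hB s, Finset.mul_sum, Finset.sum_mul]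
      refine Finset.sum_congr rfl fun n _ => by ring
    simp only [this]
    simp [hN0]
  rw [← e1, ← e2, ← Finset.sum_sub_distrib, Finset.sum_div]
  simp only [offGrid, Matrix.mulVec, dotProduct, Finset.mul_sum]
  refine Finset.sum_congr rfl fun n _ => ?_
  rw [mul_left_comm, him]; ring

/-- For `N ≥ 100` and a signal with frequencies `f_i = (n_i + ν_i)/N` (`𝓕 = 𝓕_dom ⊔ 𝓕_res`,
positive amplitudes, dominant frequencies separated by wrap-around distance at least `2/N`),
every `f ∈ 𝓕_dom` satisfies `|p_f sin(πν_f)| ≤ 3(‖y_off‖_∞ + ∑_{f'∈𝓕_res} p_{f'})` and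
consequently `|p_f ν_f| ≤ 2(‖y_off‖_∞ + ∑_{f'∈𝓕_res} p_{f'})`. -/
theorem offgrid_small_implies_near_grid (N : ℕ) (hN : 100 ≤ N)
    (ι : Type) [Fintype ι] [DecidableEq ι] (dom res : Finset ι)
    (hdisj : Disjoint dom res) (hcover : dom ∪ res = Finset.univ)
    (nf : ι → ℕ) (hnf : ∀ i, nf i < N)
    (νf : ι → ℝ) (hνf : ∀ i, -(1 / 2) < νf i ∧ νf i ≤ 1 / 2)
    (p : ι → ℝ) (hp : ∀ i, 0 < p i)
    (f : ι → ℝ) (hf : ∀ i, f i = ((nf i : ℝ) + νf i) / (N : ℝ))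
    (hsep : ∀ i ∈ dom, ∀ j ∈ dom, i ≠ j → ∀ m : ℤ, 2 / (N : ℝ) ≤ |f i - f j - (m : ℝ)|)
    (y : Fin N → ℂ)
    (hy : ∀ t : Fin N, y t = ∑ i, (p i : ℂ) *
        Complex.exp (((-(2 * Real.pi * f i * ((t : ℕ) : ℝ))) : ℝ) * Complex.I)) :
    ∀ i ∈ dom,
      |p i * Real.sin (Real.pi * νf i)|
          ≤ 3 * ((⨆ t : Fin N, ‖offGrid N y t‖) + ∑ j ∈ res, p j) ∧
      |p i * νf i|
          ≤ 2 * ((⨆ t : Fin N, ‖offGrid N y t‖) + ∑ j ∈ res, p j) := by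
  have hN0 : (N : ℝ) ≠ 0 := by
    have : N ≠ 0 := by omega
    exact_mod_cast this
  have hN0c : (N : ℂ) ≠ 0 := by exact_mod_cast hN0
  set Y := ⨆ t : Fin N, ‖offGrid N y t‖ with hY
  set R := ∑ j ∈ res, p j with hR
  set c : ι → ℂ := fun i =>
    (p i : ℂ) * ((1 - Complex.exp (Complex.I * ((2 * Real.pi * νf i : ℝ) : ℂ))) / 2) with hc
  have hcn : ∀ i, ‖c i‖ = |p i * Real.sin (Real.pi * νf i)| := by
    intro i
    simp only [hc]
    rw [norm_mul, norm_div, norm_sub_rev, Complex.norm_exp_I_mul_ofReal_sub_one, Complex.norm_real,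
      Real.norm_eq_abs, Real.norm_eq_abs, abs_mul, abs_mul,
      show 2 * Real.pi * νf i / 2 = Real.pi * νf i by ring]
    norm_num
  have hcp : ∀ i, ‖c i‖ ≤ p i := by
    intro i
    rw [hcn, abs_mul, abs_of_pos (hp i)]
    exact mul_le_of_le_one_right (hp i).le (Real.abs_sin_le_one _)
  have hoff : ∀ t : Fin N, 1 ≤ (t : ℕ) → offGrid N y t = ∑ i, c i *
        Complex.exp (((-(2 * Real.pi * f i * ((t : ℕ) : ℝ))) : ℝ) * Complex.I) := by
    intro t ht
    have htN := t.2
    rw [aux_off N y t ⟨N - t, by omega⟩ (by simp only; omega), hy, hy, map_sum,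
      ← Finset.sum_sub_distrib, Finset.sum_div]
    refine Finset.sum_congr rfl fun i _ => ?_
    have : (starRingEnd ℂ) (Complex.exp (((-(2 * Real.pi * f i * ((N - (t : ℕ) : ℕ) : ℝ))) : ℝ)
          * Complex.I))
        = Complex.exp (Complex.I * ((2 * Real.pi * νf i : ℝ) : ℂ)) *
          Complex.exp (((-(2 * Real.pi * f i * ((t : ℕ) : ℝ))) : ℝ) * Complex.I) := by
      rw [← Complex.exp_conj, ← Complex.exp_add, Complex.exp_eq_exp_iff_exists_int]
      refine ⟨nf i, ?_⟩
      rw [map_mul, Complex.conj_ofReal, Complex.conj_I, hf i, Nat.cast_sub htN.le]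
      push_cast
      field_simp
      ring
    simp only [map_mul, Complex.conj_ofReal, this, hc]
    ring
  have hS : ∀ t : ℕ, 1 ≤ t → t < N → ‖∑ i ∈ dom, c i *
        Complex.exp (((-(2 * Real.pi * f i * (t : ℝ))) : ℝ) * Complex.I)‖ ≤ Y + R := by
    intro t ht htN
    have h1 := hoff ⟨t, htN⟩ ht
    rw [← hcover, Finset.sum_union hdisj] at h1
    have h2 : ‖offGrid N y ⟨t, htN⟩‖ ≤ Y :=
      le_ciSup (f := fun t : Fin N => ‖offGrid N y t‖) (Set.finite_range _).bddAbove ⟨t, htN⟩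
    have h3 : ‖∑ i ∈ res, c i *
        Complex.exp (((-(2 * Real.pi * f i * (t : ℝ))) : ℝ) * Complex.I)‖ ≤ R := by
      apply norm_sum_le_of_le
      intro i _
      rw [norm_mul, Complex.norm_exp_ofReal_mul_I, mul_one]
      exact hcp i
    replace h1 := eq_sub_of_add_eq h1.symm
    simp only at h1
    rw [h1]
    exact (norm_sub_le _ _).trans (add_le_add h2 h3)
  intro i hi
  have hmain := aux_main N hN dom f c (Y + R) hsep hS i hi
  rw [hcn] at hmain
  refine ⟨hmain, ?_⟩
  have hν : 2 * |νf i| ≤ |Real.sin (Real.pi * νf i)| := by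
    have h1 : |Real.pi * νf i| ≤ Real.pi / 2 := by
      rw [abs_mul, abs_of_pos Real.pi_pos]
      have : |νf i| ≤ 1 / 2 := abs_le.2 ⟨(hνf i).1.le, (hνf i).2⟩
      nlinarith [Real.pi_pos]
    have h2 := Real.mul_abs_le_abs_sin h1
    rw [abs_mul, abs_of_pos Real.pi_pos] at h2
    have : 2 / Real.pi * (Real.pi * |νf i|) = 2 * |νf i| := by
      field_simp
    linarith
  rw [abs_mul, abs_of_pos (hp i)] at hmain ⊢
  have := mul_le_mul_of_nonneg_left hν (hp i).le
  have h0 : 0 ≤ p i * |νf i| := mul_nonneg (hp i).le (abs_nonneg _)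
  linarith
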